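/- arXiv:2510.09811 — 2 statements merged into one kernel-verified Lean document; each statement's English description precedes it below -/
import Mathlib

section
/- Let ℓ ≥ 1, k = 2ℓ−1, and let C be a commutative unital ℂ-algebra containing an invertible element g and elements e₀ = 1, e₁, …, e_{2ℓ−1} satisfying the reciprocal relations g^{k−i}·e_i = e_k·e_{k−i} for all i = 0, 1, …, k−1. Define s := g^{1−ℓ}·e_{2ℓ−1}. Then s² = g, e_{2ℓ−1} = s^{2ℓ−1}, and e_{ℓ+i} = s^{2i+1}·e_{ℓ−1−i} for all i = 0, 1, …, ℓ−1. -/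
/-- resolution of the reciprocal relations in the odd case `k = 2ℓ−1`.
If `g` is invertible (with inverse `ginv`), `e₀ = 1` and the reciprocal relations
`g^{k−i}·e_i = e_k·e_{k−i}` hold for `i = 0, …, k−1`, then `s := g^{1−ℓ}·e_{2ℓ−1}`
satisfies `s² = g`, `e_{2ℓ−1} = s^{2ℓ−1}` and `e_{ℓ+i} = s^{2i+1}·e_{ℓ−1−i}`
for all `i = 0, …, ℓ−1`. -/
theorem odd_resolution
    {C : Type*} [CommRing C] [Algebra ℂ C]
    (ℓ : ℕ) (hℓ : 1 ≤ ℓ) (g ginv : C) (hg : g * ginv = 1) (hg' : ginv * g = 1)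
    (e : ℕ → C) (he0 : e 0 = 1)
    (hrec : ∀ i, i < 2 * ℓ - 1 →
      g ^ (2 * ℓ - 1 - i) * e i = e (2 * ℓ - 1) * e (2 * ℓ - 1 - i)) :
    (ginv ^ (ℓ - 1) * e (2 * ℓ - 1)) ^ 2 = g ∧
    e (2 * ℓ - 1) = (ginv ^ (ℓ - 1) * e (2 * ℓ - 1)) ^ (2 * ℓ - 1) ∧
    ∀ i, i ≤ ℓ - 1 →
      e (ℓ + i) = (ginv ^ (ℓ - 1) * e (2 * ℓ - 1)) ^ (2 * i + 1) * e (ℓ - 1 - i) := by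
  obtain ⟨m, rfl⟩ : ∃ m, ℓ = m + 1 := ⟨ℓ - 1, by omega⟩
  have hk : 2 * (m + 1) - 1 = 2 * m + 1 := by omega
  have hm : m + 1 - 1 = m := by omega
  simp only [hk] at hrec ⊢
  simp only [hm]
  have hp : ∀ n : ℕ, g ^ n * ginv ^ n = 1 := fun n => by rw [← mul_pow, hg, one_pow]
  have h0 : g ^ (2 * m + 1) = e (2 * m + 1) * e (2 * m + 1) := by
    have := hrec 0 (by omega)
    simpa [he0] using this
  obtain ⟨s, hs⟩ : ∃ s, s = ginv ^ m * e (2 * m + 1) := ⟨_, rfl⟩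
  rw [← hs]
  have hs2 : s ^ 2 = g := by
    calc s ^ 2 = ginv ^ m * ginv ^ m * (e (2 * m + 1) * e (2 * m + 1)) := by rw [hs]; ring
      _ = (g ^ m * ginv ^ m) * (g ^ m * ginv ^ m) * g := by rw [← h0]; ring
      _ = g := by rw [hp]; ring
  have hek : e (2 * m + 1) = g ^ m * s := by
    rw [hs, ← mul_assoc, hp, one_mul]
  have hodd : ∀ i : ℕ, s ^ (2 * i + 1) = g ^ i * s := fun i => by
    rw [pow_succ, pow_mul, hs2]
  refine ⟨hs2, by rw [hodd]; exact hek, fun i hi => ?_⟩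
  rw [hodd]
  have h := hrec (m - i) (by omega)
  have h1 : 2 * m + 1 - (m - i) = m + 1 + i := by omega
  rw [h1, hek] at h
  calc e (m + 1 + i) = (g ^ (m + 1) * ginv ^ (m + 1)) * e (m + 1 + i) := by rw [hp, one_mul]
    _ = ginv ^ (m + 1) * s * (g ^ m * s * e (m + 1 + i)) := by
      rw [pow_succ g m]; nth_rewrite 2 [← hs2]; ring
    _ = (g ^ (m + 1) * ginv ^ (m + 1)) * (g ^ i * s * e (m - i)) := by rw [← h]; ring
    _ = g ^ i * s * e (m - i) := by rw [hp, one_mul]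
end

section
/- Let W be a unital associative ℂ-algebra containing elements σ₁,…,σ_{2j−1} satisfying the BMW relations with parameters q, μ. Then a^{(j)↑j}·c^{(2j)} = a^{(j)}·c^{(2j)} in W, where x^{↑p} denotes the shift of indices of generators by p (σ_i ↦ σ_{i+p}, κ_i ↦ κ_{i+p}). -/
noncomputable section

/-- q-number `(i)_q`. -/
def qnum (q : ℂ) (i : ℕ) : ℂ := (q ^ i - q⁻¹ ^ i) / (q - q⁻¹)

/-- `η = (q−μ)(q⁻¹+μ)/(μ(q−q⁻¹))`. -/
def etaC (q μ : ℂ) : ℂ := (q - μ) * (q⁻¹ + μ) / (μ * (q - q⁻¹))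

variable {W : Type*}

/-- `κ_i = (q−σ_i)(q⁻¹+σ_i)/(μ(q−q⁻¹))`. -/
def kap (q μ : ℂ) [Ring W] [Algebra ℂ W] (σ : ℕ → W) (i : ℕ) : W :=
  (μ * (q - q⁻¹))⁻¹ • ((algebraMap ℂ W q - σ i) * (algebraMap ℂ W q⁻¹ + σ i))

/-- Baxterized element `σ_i⁻(x)`. -/
def sMinus (q μ : ℂ) [Ring W] [Algebra ℂ W] (σ : ℕ → W) (i : ℕ) (x : ℂ) : W :=
  1 + ((x - 1) / (q - q⁻¹)) • σ i + (μ * (x - 1) / (μ + q * x)) • kap q μ σ i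

/-- q-antisymmetrizer `a^{(m)↑p}` (shifted by `p`, using the generators
`σ_{p+1}, …, σ_{p+m−1}`):  `aW q μ σ p m = a^{(m)↑p}`. -/
def aW (q μ : ℂ) [Ring W] [Algebra ℂ W] (σ : ℕ → W) (p : ℕ) : ℕ → W
  | 0 => 1
  | 1 => 1
  | (m + 2) =>
      (q ^ (m + 1) / qnum q (m + 2)) •
        (aW q μ σ p (m + 1) * sMinus q μ σ (p + m + 1) ((q ^ (2 * (m + 1)))⁻¹) *
          aW q μ σ p (m + 1))

/-- Contractor `c^{(2i)↑p}` (shifted by `p`):  `cW q μ σ p i = c^{(2i)↑p}`. -/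
def cW (q μ : ℂ) [Ring W] [Algebra ℂ W] (σ : ℕ → W) : ℕ → ℕ → W
  | _, 0 => 1
  | p, 1 => (etaC q μ)⁻¹ • kap q μ σ (p + 1)
  | p, (i + 2) =>
      cW q μ σ (p + 1) (i + 1) * kap q μ σ (p + 1) * kap q μ σ (p + 2 * i + 3) *
        cW q μ σ (p + 1) (i + 1)

/-- The elements `σ₁, …, σ_{n−1}` (with inverses `σi`) satisfy the BMW relations with
parameters `q`, `μ`. -/
def BMWrels (q μ : ℂ) [Ring W] [Algebra ℂ W] (n : ℕ) (σ σi : ℕ → W) : Prop :=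
  (∀ i, 1 ≤ i → i ≤ n - 1 → σ i * σi i = 1 ∧ σi i * σ i = 1) ∧
  (∀ i, 1 ≤ i → i + 1 ≤ n - 1 → σ i * σ (i + 1) * σ i = σ (i + 1) * σ i * σ (i + 1)) ∧
  (∀ i j, 1 ≤ i → i ≤ n - 1 → 1 ≤ j → j ≤ n - 1 → i + 1 < j → σ i * σ j = σ j * σ i) ∧
  (∀ i, 1 ≤ i → i ≤ n - 1 →
    σ i * kap q μ σ i = μ • kap q μ σ i ∧
    kap q μ σ i * σ i = μ • kap q μ σ i ∧
    kap q μ σ i * kap q μ σ i = etaC q μ • kap q μ σ i) ∧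
  (∀ i, 1 ≤ i → i + 1 ≤ n - 1 →
    kap q μ σ i * kap q μ σ (i + 1) * kap q μ σ i = kap q μ σ i ∧
    kap q μ σ (i + 1) * kap q μ σ i * kap q μ σ (i + 1) = kap q μ σ (i + 1) ∧
    (∀ τ τ' : ℕ → W, (τ = σ ∧ τ' = σi) ∨ (τ = σi ∧ τ' = σ) →
      kap q μ σ i * τ (i + 1) = kap q μ σ i * kap q μ σ (i + 1) * τ' i ∧
      kap q μ σ (i + 1) * τ i = kap q μ σ (i + 1) * kap q μ σ i * τ' (i + 1) ∧
      τ (i + 1) * kap q μ σ i = τ' i * kap q μ σ (i + 1) * kap q μ σ i ∧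
      τ i * kap q μ σ (i + 1) = τ' (i + 1) * kap q μ σ i * kap q μ σ (i + 1)))


/-- Yang-Baxter equation for Baxterized elements, abstract form. -/
theorem yb_abstract {A : Type*} [Ring A] [Algebra ℂ A] (q μ x y : ℂ)
    (hq : q ≠ 0) (hl : q ^ 2 - 1 ≠ 0) (hμ : μ ≠ 0)
    (hx : μ + q * x ≠ 0) (hy : μ + q * y ≠ 0) (hxy : μ + q * (x * y) ≠ 0)
    (s k t l : A)
    (ss : s * s = 1 + (q - q⁻¹) • s - (μ * (q - q⁻¹)) • k)
    (tt : t * t = 1 + (q - q⁻¹) • t - (μ * (q - q⁻¹)) • l)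
    (sk : s * k = μ • k) (ks : k * s = μ • k) (kk : k * k = etaC q μ • k)
    (tl : t * l = μ • l) (lt_ : l * t = μ • l) (ll : l * l = etaC q μ • l)
    (sts : s * t * s = t * s * t)
    (klk : k * l * k = k) (lkl : l * k * l = l)
    (kls : k * l * s = k * t + (q - q⁻¹) • (k * l) - (q - q⁻¹) • k)
    (lkt : l * k * t = l * s + (q - q⁻¹) • (l * k) - (q - q⁻¹) • l)
    (slk : s * l * k = t * k + (q - q⁻¹) • (l * k) - (q - q⁻¹) • k)
    (tkl : t * k * l = s * l + (q - q⁻¹) • (k * l) - (q - q⁻¹) • l)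
    (ktk : k * t * k = μ⁻¹ • k) (lsl : l * s * l = μ⁻¹ • l)
    (stk : s * t * k = l * k) (kts : k * t * s = k * l)
    (tsl : t * s * l = k * l) (lst : l * s * t = l * k)
    (tkt : t * k * t = s * l * s - (q - q⁻¹) • (s * l) + (q - q⁻¹) • (t * k)
      + ((q - q⁻¹) * (q - q⁻¹)) • (l * k) - ((q - q⁻¹) * (q - q⁻¹)) • k
      - (q - q⁻¹) • (l * s) + ((q - q⁻¹) * (q - q⁻¹)) • l 
      - ((q - q⁻¹) * (q - q⁻¹)) • (l * k)
      + (q - q⁻¹) • (k * t) + ((q - q⁻¹) * (q - q⁻¹)) • (k * l) 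
      - ((q - q⁻¹) * (q - q⁻¹)) • k - ((q - q⁻¹) * (q - q⁻¹)) • (k * l)
      + ((q - q⁻¹) * (q - q⁻¹)) • k) :
    (1 + ((x - 1) / (q - q⁻¹)) • s + (μ * (x - 1) / (μ + q * x)) • k) *
    (1 + ((x * y - 1) / (q - q⁻¹)) • t + (μ * (x * y - 1) / (μ + q * (x * y))) • l) *
    (1 + ((y - 1) / (q - q⁻¹)) • s + (μ * (y - 1) / (μ + q * y)) • k) =
    (1 + ((y - 1) / (q - q⁻¹)) • t + (μ * (y - 1) / (μ + q * y)) • l) *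
    (1 + ((x * y - 1) / (q - q⁻¹)) • s + (μ * (x * y - 1) / (μ + q * (x * y))) • k) *
    (1 + ((x - 1) / (q - q⁻¹)) • t + (μ * (x - 1) / (μ + q * x)) • l) := by
  have hl' : q - q⁻¹ ≠ 0 := by
    intro h; apply hl; field_simp at h; simpa using h
  simp only [mul_add, add_mul, smul_mul_assoc, mul_smul_comm, one_mul, mul_one, smul_add,
    ss, tt, sk, ks, kk, tl, lt_, ll, sts, klk, lkl, kls, lkt, slk, tkl, ktk, lsl, stk, kts, tsl,
    lst, tkt]
  simp only [etaC]
  have hxy2 : μ + q * x * y ≠ 0 := by rwa [mul_assoc]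
  have hx1 : μ + x * q ≠ 0 := by rwa [mul_comm x q]
  have hy1 : μ + y * q ≠ 0 := by rwa [mul_comm y q]
  have hxy3 : μ + x * q * y ≠ 0 := by rwa [mul_comm x q]
  have hxy4 : μ + x * y * q ≠ 0 := by rwa [mul_comm (x * y) q]
  have hxy5 : μ + y * x * q ≠ 0 := by rwa [mul_comm y x]
  have hxy6 : μ + y * q * x ≠ 0 := by rwa [mul_right_comm y q x]
  have hxy7 : μ + q * y * x ≠ 0 := by rwa [mul_comm q y]
  clear ss tt sk ks kk tl lt_ ll sts klk lkl kls lkt slk tkl ktk lsl stk kts tsl lst tkt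
  match_scalars <;> field_simp <;> try ring1

theorem yb_pair {A : Type*} [Ring A] [Algebra ℂ A] (q μ x y : ℂ)
    (hq : q ≠ 0) (hl : q ^ 2 - 1 ≠ 0) (hμ : μ ≠ 0)
    (hx : μ + q * x ≠ 0) (hy : μ + q * y ≠ 0) (hxy : μ + q * (x * y) ≠ 0)
    (s k t l s' t' : A)
    (ss : s * s = 1 + (q - q⁻¹) • s - (μ * (q - q⁻¹)) • k)
    (tt : t * t = 1 + (q - q⁻¹) • t - (μ * (q - q⁻¹)) • l)
    (s1 : s * s' = 1) (s2 : s' * s = 1) (t1 : t * t' = 1) (t2 : t' * t = 1)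
    (sk : s * k = μ • k) (ks : k * s = μ • k) (kk : k * k = etaC q μ • k)
    (tl : t * l = μ • l) (lt_ : l * t = μ • l) (ll : l * l = etaC q μ • l)
    (sts : s * t * s = t * s * t)
    (klk : k * l * k = k) (lkl : l * k * l = l)
    (a1 : k * t = k * l * s') (a2 : k * t' = k * l * s)
    (a3 : l * s = l * k * t') (a4 : l * s' = l * k * t)
    (a5 : t * k = s' * l * k) (a6 : t' * k = s * l * k)
    (a7 : s * l = t' * k * l) (a8 : s' * l = t * k * l) :
    (1 + ((x - 1) / (q - q⁻¹)) • s + (μ * (x - 1) / (μ + q * x)) • k) *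
    (1 + ((x * y - 1) / (q - q⁻¹)) • t + (μ * (x * y - 1) / (μ + q * (x * y))) • l) *
    (1 + ((y - 1) / (q - q⁻¹)) • s + (μ * (y - 1) / (μ + q * y)) • k) =
    (1 + ((y - 1) / (q - q⁻¹)) • t + (μ * (y - 1) / (μ + q * y)) • l) *
    (1 + ((x * y - 1) / (q - q⁻¹)) • s + (μ * (x * y - 1) / (μ + q * (x * y))) • k) *
    (1 + ((x - 1) / (q - q⁻¹)) • t + (μ * (x - 1) / (μ + q * x)) • l) := by
  have key : ∀ (s s' k : A), s * s' = 1 → s' * s = 1 → s * k = μ • k →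
      s * s = 1 + (q - q⁻¹) • s - (μ * (q - q⁻¹)) • k →
      s' * k = μ⁻¹ • k ∧ s' = s - (q - q⁻¹) • (1 : A) + (q - q⁻¹) • k := by
    intro s s' k s1 s2 sk ss
    have e1 : s' * k = μ⁻¹ • k := by
      have : s' * (s * k) = s' * (μ • k) := by rw [sk]
      rw [← mul_assoc, s2, one_mul, mul_smul_comm] at this
      rw [eq_inv_smul_iff₀ hμ]
      exact this.symm
    refine ⟨e1, ?_⟩
    have : s' * (s * s) = s' * (1 + (q - q⁻¹) • s - (μ * (q - q⁻¹)) • k) := by rw [ss]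
    rw [← mul_assoc, s2, one_mul, mul_sub, mul_add, mul_one, mul_smul_comm, mul_smul_comm, s2, e1,
      smul_smul] at this
    have e2 : μ * (q - q⁻¹) * μ⁻¹ = q - q⁻¹ := by field_simp
    rw [e2] at this
    rw [this]; abel
  obtain ⟨sk', es⟩ := key s s' k s1 s2 sk ss
  obtain ⟨tl', et⟩ := key t t' l t1 t2 tl tt
  have kls : k * l * s = k * t + (q - q⁻¹) • (k * l) - (q - q⁻¹) • k := by
    rw [← a2, et, mul_add, mul_sub, mul_smul_comm, mul_smul_comm, mul_one]; abel
  have slk : s * l * k = t * k + (q - q⁻¹) • (l * k) - (q - q⁻¹) • k := by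
    rw [← a6, et, add_mul, sub_mul, smul_mul_assoc, smul_mul_assoc, one_mul]; abel
  have lkt : l * k * t = l * s + (q - q⁻¹) • (l * k) - (q - q⁻¹) • l := by
    rw [← a4, es, mul_add, mul_sub, mul_smul_comm, mul_smul_comm, mul_one]; abel
  have tkl : t * k * l = s * l + (q - q⁻¹) • (k * l) - (q - q⁻¹) • l := by
    rw [← a8, es, add_mul, sub_mul, smul_mul_assoc, smul_mul_assoc, one_mul]; abel
  refine yb_abstract q μ x y hq hl hμ hx hy hxy s k t l ss tt sk ks kk tl lt_ ll sts klk lkl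
    kls lkt slk tkl ?_ ?_ ?_ ?_ ?_ ?_ ?_
  · rw [a1, mul_assoc, sk', mul_smul_comm, klk]
  · rw [a3, mul_assoc, tl', mul_smul_comm, lkl]
  · rw [mul_assoc, a5, ← mul_assoc, ← mul_assoc, s1, one_mul]
  · rw [a1, mul_assoc, s2, mul_one]
  · rw [mul_assoc, a7, ← mul_assoc, ← mul_assoc, t1, one_mul]
  · rw [a3, mul_assoc, t2, mul_one]
  · rw [a5, mul_assoc, mul_assoc, ← mul_assoc l k t, ← a4, es]
    simp only [mul_add, mul_sub, add_mul, sub_mul, smul_mul_assoc, mul_smul_comm, one_mul, mul_one,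
      ← mul_assoc, kls, slk, klk]
    module

section absorb
variable {A : Type*} [Ring A] [Algebra ℂ A]

theorem kap_sq (q μ : ℂ) (hq : q ≠ 0) (hl : q - q⁻¹ ≠ 0) (hμ : μ ≠ 0) (σ : ℕ → A) (i : ℕ) :
    σ i * σ i = 1 + (q - q⁻¹) • σ i - (μ * (q - q⁻¹)) • kap q μ σ i := by
  have h : μ * (q - q⁻¹) ≠ 0 := mul_ne_zero hμ hl
  rw [kap, smul_smul, mul_inv_cancel₀ h, one_smul, Algebra.algebraMap_eq_smul_one,
    Algebra.algebraMap_eq_smul_one]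
  simp only [mul_add, sub_mul, smul_mul_assoc, mul_smul_comm, one_mul, mul_one, smul_sub, smul_smul]
  rw [inv_mul_cancel₀ hq]
  module

theorem commute_kap (q μ : ℂ) {σ : ℕ → A} {x : A} {i : ℕ} (h : Commute x (σ i)) :
    Commute x (kap q μ σ i) := by
  unfold kap
  exact Commute.smul_right (Commute.mul_right
    (Commute.sub_right (Algebra.commutes q x).symm h)
    (Commute.add_right (Algebra.commutes q⁻¹ x).symm h)) _

theorem commute_sMinus (q μ : ℂ) {σ : ℕ → A} {x : A} {i : ℕ} (h : Commute x (σ i)) (y : ℂ) :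
    Commute x (sMinus q μ σ i y) := by
  unfold sMinus
  exact Commute.add_right (Commute.add_right (Commute.one_right x) (Commute.smul_right h _))
    (Commute.smul_right (commute_kap q μ h) _)

theorem commute_aW (q μ : ℂ) {σ : ℕ → A} {x : A} (p m : ℕ)
    (h : ∀ i, p < i → i < p + m → Commute x (σ i)) : Commute x (aW q μ σ p m) := by
  induction m with
  | zero => simp [aW]
  | succ m ih =>
    cases m with
    | zero => simp [aW]
    | succ m =>
      have h1 := ih (fun i hi hi' => h i hi (by omega))
      rw [aW]
      exact Commute.smul_right (Commute.mul_right (Commute.mul_right h1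
        (commute_sMinus q μ (h _ (by omega) (by omega)) _)) h1) _

theorem aW_shift (q μ : ℂ) (σ : ℕ → A) (p m : ℕ) :
    aW q μ σ p m = aW q μ (fun i => σ (p + i)) 0 m := by
  induction m with
  | zero => simp [aW]
  | succ m ih =>
    cases m with
    | zero => simp [aW]
    | succ m =>
      rw [aW, aW, ih]
      simp only [sMinus, kap, zero_add, add_assoc]

theorem qchar (q : ℂ) (hq : q ≠ 0) (hl : q - q⁻¹ ≠ 0) (m : ℕ) :
    1 + ((q ^ (2 * m))⁻¹ - 1) / (q - q⁻¹) * (-q⁻¹) = (q ^ m)⁻¹ * qnum q (m + 1) := by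
  have hl2 : q ^ 2 - 1 ≠ 0 := by
    intro h; apply hl; field_simp; simpa using h
  unfold qnum
  rw [inv_pow]
  field_simp
  ring

theorem sMinus_left (q μ : ℂ) (hq : q ≠ 0) (hl : q - q⁻¹ ≠ 0) {σ : ℕ → A} {i : ℕ} {z : A}
    (h : σ i * z = (-q⁻¹) • z) (m : ℕ) :
    sMinus q μ σ i (q ^ (2 * m))⁻¹ * z = ((q ^ m)⁻¹ * qnum q (m + 1)) • z := by
  have hk : kap q μ σ i * z = 0 := by
    have : (algebraMap ℂ A q⁻¹ + σ i) * z = 0 := by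
      rw [add_mul, h, Algebra.algebraMap_eq_smul_one, smul_mul_assoc, one_mul]; module
    rw [kap, smul_mul_assoc, mul_assoc, this, mul_zero, smul_zero]
  rw [sMinus, add_mul, add_mul, smul_mul_assoc, smul_mul_assoc, hk, h, ← qchar q hq hl, one_mul]
  module

theorem sMinus_right (q μ : ℂ) (hq : q ≠ 0) (hl : q - q⁻¹ ≠ 0) {σ : ℕ → A} {i : ℕ} {z : A}
    (h : z * σ i = (-q⁻¹) • z) (m : ℕ) :
    z * sMinus q μ σ i (q ^ (2 * m))⁻¹ = ((q ^ m)⁻¹ * qnum q (m + 1)) • z := by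
  have hk : z * kap q μ σ i = 0 := by
    have e : (algebraMap ℂ A q - σ i) * (algebraMap ℂ A q⁻¹ + σ i) =
        (algebraMap ℂ A q⁻¹ + σ i) * (algebraMap ℂ A q - σ i) := by
      have c1 : Commute (algebraMap ℂ A q) (σ i) := Algebra.commutes q _
      have c2 : Commute (algebraMap ℂ A q⁻¹) (σ i) := Algebra.commutes q⁻¹ _
      have c3 : Commute (algebraMap ℂ A q) (algebraMap ℂ A q⁻¹) := Algebra.commutes q _
      exact ((c3.add_right c1).sub_left ((c2.symm).add_right (Commute.refl _))).eq
    have : z * (algebraMap ℂ A q⁻¹ + σ i) = 0 := by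
      rw [mul_add, h, Algebra.algebraMap_eq_smul_one, mul_smul_comm, mul_one]; module
    rw [kap, e, mul_smul_comm, ← mul_assoc, this, zero_mul, smul_zero]
  rw [sMinus, mul_add, mul_add, mul_smul_comm, mul_smul_comm, hk, h, ← qchar q hq hl, mul_one]
  module

theorem aW_left (q μ : ℂ) (hq : q ≠ 0) (hl : q - q⁻¹ ≠ 0) {σ : ℕ → A} {z : A} (m : ℕ)
    (hn : ∀ k, 2 ≤ k → k ≤ m → qnum q k ≠ 0)
    (h : ∀ i, 1 ≤ i → i < m → σ i * z = (-q⁻¹) • z) : aW q μ σ 0 m * z = z := by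
  induction m with
  | zero => simp [aW]
  | succ m ih =>
    cases m with
    | zero => simp [aW]
    | succ m =>
      have h1 := ih (fun k hk hk' => hn k hk (by omega)) (fun i hi hi' => h i hi (by omega))
      have h2 := hn (m + 2) (by omega) (by omega)
      have h3 : q ^ (m + 1) ≠ 0 := pow_ne_zero _ hq
      rw [aW, smul_mul_assoc, mul_assoc, mul_assoc, h1,
        sMinus_left q μ hq hl (h _ (by omega) (by omega)), mul_smul_comm, h1, smul_smul]
      have : q ^ (m + 1) / qnum q (m + 2) * ((q ^ (m + 1))⁻¹ * qnum q (m + 1 + 1)) = 1 := by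
        field_simp
      rw [this, one_smul]

theorem aW_right (q μ : ℂ) (hq : q ≠ 0) (hl : q - q⁻¹ ≠ 0) {σ : ℕ → A} {z : A} (m : ℕ)
    (hn : ∀ k, 2 ≤ k → k ≤ m → qnum q k ≠ 0)
    (h : ∀ i, 1 ≤ i → i < m → z * σ i = (-q⁻¹) • z) : z * aW q μ σ 0 m = z := by
  induction m with
  | zero => simp [aW]
  | succ m ih =>
    cases m with
    | zero => simp [aW]
    | succ m =>
      have h1 := ih (fun k hk hk' => hn k hk (by omega)) (fun i hi hi' => h i hi (by omega))
      have h2 := hn (m + 2) (by omega) (by omega)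
      have h3 : q ^ (m + 1) ≠ 0 := pow_ne_zero _ hq
      rw [aW, mul_smul_comm, ← mul_assoc, ← mul_assoc, h1,
        sMinus_right q μ hq hl (h _ (by omega) (by omega)), smul_mul_assoc, h1, smul_smul]
      have : q ^ (m + 1) / qnum q (m + 2) * ((q ^ (m + 1))⁻¹ * qnum q (m + 1 + 1)) = 1 := by
        field_simp
      rw [this, one_smul]

/-- What is needed of generators `σ_1, …, σ_N` to construct antisymmetrizers. -/
structure GoodSeq (q μ : ℂ) (σ : ℕ → A) (N : ℕ) : Prop where
  comm : ∀ i j, 1 ≤ i → i + 1 < j → j ≤ N → Commute (σ i) (σ j)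
  proj : ∀ i, 1 ≤ i → i ≤ N →
    σ i * sMinus q μ σ i (q ^ (2 * 1))⁻¹ = (-q⁻¹) • sMinus q μ σ i (q ^ (2 * 1))⁻¹
  yb1 : ∀ i m, 1 ≤ i → i + 1 ≤ N → 1 ≤ m → m + 1 ≤ N →
    sMinus q μ σ i (q ^ (2 * m))⁻¹ * sMinus q μ σ (i + 1) (q ^ (2 * (m + 1)))⁻¹ *
      sMinus q μ σ i (q ^ (2 * 1))⁻¹ =
    sMinus q μ σ (i + 1) (q ^ (2 * 1))⁻¹ * sMinus q μ σ i (q ^ (2 * (m + 1)))⁻¹ *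
      sMinus q μ σ (i + 1) (q ^ (2 * m))⁻¹
  yb2 : ∀ i m, 1 ≤ i → i + 1 ≤ N → 1 ≤ m → m + 1 ≤ N →
    sMinus q μ σ i (q ^ (2 * 1))⁻¹ * sMinus q μ σ (i + 1) (q ^ (2 * (m + 1)))⁻¹ *
      sMinus q μ σ i (q ^ (2 * m))⁻¹ =
    sMinus q μ σ (i + 1) (q ^ (2 * m))⁻¹ * sMinus q μ σ i (q ^ (2 * (m + 1)))⁻¹ *
      sMinus q μ σ (i + 1) (q ^ (2 * 1))⁻¹

theorem GoodSeq.absorb {q μ : ℂ} {σ : ℕ → A} {N : ℕ} (hg : GoodSeq q μ σ N)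
    (hq : q ≠ 0) (hl : q - q⁻¹ ≠ 0) (hn : ∀ k, 2 ≤ k → k ≤ N + 1 → qnum q k ≠ 0)
    (m : ℕ) (hm : m ≤ N + 1) : ∀ i, 1 ≤ i → i < m →
      σ i * aW q μ σ 0 m = (-q⁻¹) • aW q μ σ 0 m ∧ aW q μ σ 0 m * σ i = (-q⁻¹) • aW q μ σ 0 m := by
  have proj' : ∀ i, 1 ≤ i → i ≤ N →
      sMinus q μ σ i (q ^ (2 * 1))⁻¹ * σ i = (-q⁻¹) • sMinus q μ σ i (q ^ (2 * 1))⁻¹ := by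
    intro i h1 h2
    rw [← hg.proj i h1 h2]
    exact (commute_sMinus q μ (Commute.refl (σ i)) _).eq.symm
  induction m with
  | zero => intro i h1 h2; omega
  | succ m ih =>
    cases m with
    | zero => intro i h1 h2; omega
    | succ m =>
      have ih := ih (by omega)
      intro i h1 h2
      rw [aW]
      by_cases hi : i < m + 1
      · obtain ⟨e1, e2⟩ := ih i h1 hi
        constructor
        · rw [mul_smul_comm, ← mul_assoc, ← mul_assoc, e1, smul_mul_assoc, smul_mul_assoc,
            smul_comm]
        · rw [smul_mul_assoc, mul_assoc, e2, mul_smul_comm, smul_comm]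
      have hi : i = m + 1 := by omega
      subst hi
      simp only [zero_add]
      cases m with
      | zero =>
        simp only [zero_add, aW, one_mul, mul_one, mul_smul_comm, smul_mul_assoc]
        rw [hg.proj 1 le_rfl (by omega), proj' 1 le_rfl (by omega)]
        exact ⟨smul_comm _ _ _, smul_comm _ _ _⟩
      | succ m =>
        have hn2 := hn 2 le_rfl (by omega)
        have hχ : (q ^ 1)⁻¹ * qnum q (1 + 1) ≠ 0 :=
          mul_ne_zero (inv_ne_zero (pow_ne_zero _ hq)) hn2
        set χ := (q ^ 1)⁻¹ * qnum q (1 + 1) with hχd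
        obtain ⟨e1, e2⟩ := ih (m + 1) (by omega) (by omega)
        have f1 := sMinus_left q μ hq hl e1 1
        have f2 := sMinus_right q μ hq hl e2 1
        rw [← hχd] at f1 f2
        have g1 : aW q μ σ 0 (m + 1 + 1) * aW q μ σ 0 (m + 1) = aW q μ σ 0 (m + 1 + 1) :=
          aW_right q μ hq hl _ (fun k h1 h2 => hn k h1 (by omega))
            (fun i h1 h2 => (ih i h1 (by omega)).2)
        have g2 : aW q μ σ 0 (m + 1) * aW q μ σ 0 (m + 1 + 1) = aW q μ σ 0 (m + 1 + 1) :=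
          aW_left q μ hq hl _ (fun k h1 h2 => hn k h1 (by omega))
            (fun i h1 h2 => (ih i h1 (by omega)).1)
        have cσ : Commute (σ (m + 1 + 1)) (aW q μ σ 0 (m + 1)) :=
          commute_aW q μ 0 (m + 1) (fun i h1 h2 =>
            (hg.comm i (m + 1 + 1) (by omega) (by omega) (by omega)).symm)
        have cS : Commute (aW q μ σ 0 (m + 1)) (sMinus q μ σ (m + 1 + 1) (q ^ (2 * (m + 1 + 1)))⁻¹) :=
          commute_sMinus q μ cσ.symm _
        have y1 := hg.yb1 (m + 1) (m + 1) (by omega) (by omega) (by omega) (by omega)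
        have y2 := hg.yb2 (m + 1) (m + 1) (by omega) (by omega) (by omega) (by omega)
        have p1 := hg.proj (m + 1 + 1) (by omega) (by omega)
        have p2 := proj' (m + 1 + 1) (by omega) (by omega)
        have ad : aW q μ σ 0 (m + 1 + 1) = (q ^ (m + 1) / qnum q (m + 2)) •
          (aW q μ σ 0 (m + 1) * sMinus q μ σ (m + 1) ((q ^ (2 * (m + 1)))⁻¹) *
            aW q μ σ 0 (m + 1)) := by rw [aW, zero_add]
        generalize aW q μ σ 0 (m + 1 + 1) = a at *
        generalize aW q μ σ 0 (m + 1) = b at *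
        generalize sMinus q μ σ (m + 1 + 1) (q ^ (2 * (m + 1 + 1)))⁻¹ = S at *
        generalize sMinus q μ σ (m + 1) (q ^ (2 * (m + 1)))⁻¹ = T at *
        generalize sMinus q μ σ (m + 1) (q ^ (2 * 1))⁻¹ = U at *
        generalize sMinus q μ σ (m + 1 + 1) (q ^ (2 * 1))⁻¹ = V at *
        generalize sMinus q μ σ (m + 1) (q ^ (2 * (m + 1 + 1)))⁻¹ = X at *
        generalize sMinus q μ σ (m + 1 + 1) (q ^ (2 * (m + 1)))⁻¹ = Y at *
        generalize σ (m + 1 + 1) = s at *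
        generalize q ^ (m + 1) / qnum q (m + 2) = C at *
        have E1 : χ • (a * S * a) = C • (b * (V * X * Y) * a) := by
          rw [← y1, ← mul_smul_comm, ← f1]
          nth_rewrite 1 [ad]
          rw [smul_mul_assoc, smul_mul_assoc]
          congr 1
          calc b * T * b * S * (U * a) = b * T * (b * S) * U * a := by simp only [mul_assoc]
            _ = b * T * S * (b * (U * a)) := by rw [cS.eq]; simp only [mul_assoc]
            _ = b * (T * S * U) * a := by
              rw [f1, mul_smul_comm, g2, ← f1]; simp only [mul_assoc]
        have E2 : χ • (a * S * a) = C • (a * (Y * X * V) * b) := by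
          rw [← y2, ← smul_mul_assoc, ← smul_mul_assoc, ← f2]
          nth_rewrite 2 [ad]
          rw [mul_smul_comm]
          congr 1
          calc a * U * S * (b * T * b) = a * U * (S * b) * T * b := by simp only [mul_assoc]
            _ = a * U * b * S * T * b := by rw [← cS.eq]; simp only [mul_assoc]
            _ = a * (U * S * T) * b := by
              rw [f2, smul_mul_assoc, g1, ← f2]; simp only [mul_assoc]
        have F1 : s * (a * S * a) = (-q⁻¹) • (a * S * a) := by
          have : χ • (s * (a * S * a)) = χ • ((-q⁻¹) • (a * S * a)) := by
            rw [smul_comm χ, E1, ← mul_smul_comm, E1, mul_smul_comm]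
            rw [smul_comm (-q⁻¹) C]
            congr 1
            calc s * (b * (V * X * Y) * a) = (s * b) * V * X * Y * a := by simp only [mul_assoc]
              _ = b * (s * V) * X * Y * a := by rw [cσ.eq]; simp only [mul_assoc]
              _ = _ := by rw [p1]; simp only [mul_assoc, smul_mul_assoc, mul_smul_comm]
          have := congrArg (fun z => χ⁻¹ • z) this
          simpa only [smul_smul, inv_mul_cancel₀ hχ, one_smul, ← mul_assoc, one_mul] using this
        have F2 : (a * S * a) * s = (-q⁻¹) • (a * S * a) := by
          have : χ • ((a * S * a) * s) = χ • ((-q⁻¹) • (a * S * a)) := by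
            rw [smul_comm χ, E2, ← smul_mul_assoc, E2, smul_mul_assoc]
            rw [smul_comm (-q⁻¹) C]
            congr 1
            calc (a * (Y * X * V) * b) * s = a * Y * X * V * (b * s) := by simp only [mul_assoc]
              _ = a * Y * X * (V * s) * b := by rw [← cσ.eq]; simp only [mul_assoc]
              _ = _ := by rw [p2]; simp only [mul_assoc, smul_mul_assoc, mul_smul_comm]
          have := congrArg (fun z => χ⁻¹ • z) this
          simpa only [smul_smul, inv_mul_cancel₀ hχ, one_smul, ← mul_assoc, one_mul] using this
        constructor
        · rw [mul_smul_comm, F1, smul_comm]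
        · rw [smul_mul_assoc, F2, smul_comm]

end absorb

section contract
variable {A : Type*} [Ring A] [Algebra ℂ A]

theorem commute_cW (q μ : ℂ) {σ : ℕ → A} {x : A} (i : ℕ) : ∀ p : ℕ,
    (∀ r, p < r → r < p + 2 * i → Commute x (σ r)) → Commute x (cW q μ σ p i) := by
  induction i with
  | zero => intro p h; simp [cW]
  | succ i ih =>
    intro p h
    cases i with
    | zero =>
      rw [cW]
      exact Commute.smul_right (commute_kap q μ (h _ (by omega) (by omega))) _
    | succ i =>
      have h1 := ih (p + 1) (fun r hr hr' => h r (by omega) (by omega))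
      rw [cW]
      exact Commute.mul_right (Commute.mul_right (Commute.mul_right h1
        (commute_kap q μ (h _ (by omega) (by omega))))
        (commute_kap q μ (h _ (by omega) (by omega)))) h1

variable {q μ : ℂ} {n : ℕ} {σ σi : ℕ → A}

theorem BMWrels.cs (h : BMWrels q μ n σ σi) {i j : ℕ} (hi : 1 ≤ i) (hi' : i < n) (hj : 1 ≤ j)
    (hj' : j < n) (hij : i + 1 < j ∨ j + 1 < i) : Commute (σ i) (σ j) := by
  rcases hij with hij | hij
  · exact h.2.2.1 i j hi (by omega) hj (by omega) hij
  · exact (h.2.2.1 j i hj (by omega) hi (by omega) hij).symm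

theorem commute_inv {x s s' : A} (h1 : s * s' = 1) (h2 : s' * s = 1) (h : Commute x s) :
    Commute x s' := by
  have : x * s' = s' * x := by
    calc x * s' = s' * s * x * s' := by rw [h2, one_mul]
      _ = s' * (s * x) * s' := by rw [mul_assoc s']
      _ = s' * (x * s) * s' := by rw [h.eq]
      _ = s' * x * (s * s') := by simp only [mul_assoc]
      _ = s' * x := by rw [h1, mul_one]
  exact this

theorem BMWrels.ci (h : BMWrels q μ n σ σi) {i : ℕ} {x : A} (hi : 1 ≤ i) (hi' : i < n)
    (hx : Commute x (σ i)) : Commute x (σi i) :=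
  commute_inv (h.1 i hi (by omega)).1 (h.1 i hi (by omega)).2 hx

theorem BMWrels.kk (h : BMWrels q μ n σ σi) {i j : ℕ} (hi : 1 ≤ i) (hi' : i < n) (hj : 1 ≤ j)
    (hj' : j < n) (hij : i + 1 < j ∨ j + 1 < i) : Commute (kap q μ σ i) (kap q μ σ j) :=
  commute_kap q μ (commute_kap q μ (h.cs hi hi' hj hj' hij).symm).symm

theorem BMWrels.sk (h : BMWrels q μ n σ σi) {i j : ℕ} (hi : 1 ≤ i) (hi' : i < n) (hj : 1 ≤ j)
    (hj' : j < n) (hij : i + 1 < j ∨ j + 1 < i) : Commute (σ i) (kap q μ σ j) :=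
  commute_kap q μ (h.cs hi hi' hj hj' hij)

theorem BMWrels.ik (h : BMWrels q μ n σ σi) {i j : ℕ} (hi : 1 ≤ i) (hi' : i < n) (hj : 1 ≤ j)
    (hj' : j < n) (hij : i + 1 < j ∨ j + 1 < i) : Commute (σi i) (kap q μ σ j) :=
  commute_kap q μ (h.ci hi hi' (h.cs hj hj' hi hi' hij.symm)).symm

theorem BMWrels.c_of (h : BMWrels q μ n σ σi) {p i r : ℕ} (hp : p + 2 * i ≤ n) (hr : 1 ≤ r)
    (hr' : r < n) (hd : r < p ∨ p + 2 * i < r) : Commute (σ r) (cW q μ σ p i) :=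
  commute_cW q μ i p (fun s h1 h2 => h.cs hr hr' (by omega) (by omega) (by omega))

theorem BMWrels.ck (h : BMWrels q μ n σ σi) {p i r : ℕ} (hp : p + 2 * i ≤ n) (hr : 1 ≤ r)
    (hr' : r < n) (hd : r < p ∨ p + 2 * i < r) : Commute (cW q μ σ p i) (kap q μ σ r) :=
  commute_kap q μ (h.c_of hp hr hr' hd).symm

theorem BMWrels.cinv (h : BMWrels q μ n σ σi) {p i r : ℕ} (hp : p + 2 * i ≤ n) (hr : 1 ≤ r)
    (hr' : r < n) (hd : r < p ∨ p + 2 * i < r) : Commute (cW q μ σ p i) (σi r) :=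
  h.ci hr hr' (h.c_of hp hr hr' hd).symm

theorem cW_idem (h : BMWrels q μ n σ σi) (hη : etaC q μ ≠ 0) (i : ℕ) : ∀ p, p + 2 * i ≤ n →
    cW q μ σ p i * cW q μ σ p i = cW q μ σ p i := by
  induction i using Nat.strong_induction_on with
  | _ i ih =>
  intro p hp
  match i, ih, hp with
  | 0, _, _ => simp [cW]
  | 1, _, hp =>
    rw [cW, smul_mul_assoc, mul_smul_comm, (h.2.2.2.1 (p + 1) (by omega) (by omega)).2.2,
      smul_smul, smul_smul, mul_assoc, inv_mul_cancel₀ hη, mul_one]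
  | 2, _, hp =>
    have c13 : Commute (kap q μ σ (p + 1)) (kap q μ σ (p + 2 * 0 + 3)) :=
      h.kk (by omega) (by omega) (by omega) (by omega) (by omega)
    have k11 := (h.2.2.2.1 (p + 1) (by omega) (by omega)).2.2
    have k22 := (h.2.2.2.1 (p + 1 + 1) (by omega) (by omega)).2.2
    have k323 := (h.2.2.2.2 (p + 1 + 1) (by omega) (by omega)).2.1
    rw [cW, cW]
    have e3 : p + 2 * 0 + 3 = p + 1 + 1 + 1 := by omega
    rw [e3] at *
    generalize kap q μ σ (p + 1 + 1 + 1) = k3 at *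
    generalize kap q μ σ (p + 1 + 1) = k2 at *
    generalize kap q μ σ (p + 1) = k1 at *
    simp only [smul_mul_assoc, mul_smul_comm, smul_smul]
    have : k2 * k1 * k3 * k2 * (k2 * k1 * k3 * k2) =
        (etaC q μ * etaC q μ) • (k2 * k1 * k3 * k2) := by
      calc k2 * k1 * k3 * k2 * (k2 * k1 * k3 * k2)
          = k2 * k1 * k3 * (k2 * k2) * (k1 * k3) * k2 := by simp only [mul_assoc]
        _ = etaC q μ • (k2 * k1 * (k3 * k2 * k3) * k1 * k2) := by
          rw [k22, c13.eq]; simp only [mul_assoc, smul_mul_assoc, mul_smul_comm]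
        _ = etaC q μ • (k2 * k1 * (k1 * k3) * k2) := by
          rw [k323, c13.eq]; simp only [mul_assoc]
        _ = etaC q μ • (k2 * (k1 * k1) * k3 * k2) := by simp only [mul_assoc]
        _ = _ := by
          rw [k11]; simp only [mul_assoc, smul_mul_assoc, mul_smul_comm, smul_smul]
    rw [this, smul_smul]
    congr 1
    field_simp
  | i + 3, ih, hp =>
    have hb := ih (i + 1) (by omega) (p + 1 + 1) (by omega)
    have hB := ih (i + 2) (by omega) (p + 1) (by omega)
    have c1 := h.ck (p := p + 1 + 1) (i := i + 1) (r := p + 1) (by omega) (by omega) (by omega)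
      (by omega)
    have c2 := h.ck (p := p + 1 + 1) (i := i + 1) (r := p + 1 + 2 * i + 3 + 1) (by omega)
      (by omega) (by omega) (by omega)
    have d1 : Commute (kap q μ σ (p + 1 + 2 * i + 3)) (kap q μ σ (p + 1)) :=
      h.kk (by omega) (by omega) (by omega) (by omega) (by omega)
    have d2 : Commute (kap q μ σ (p + 1 + 2 * i + 3 + 1)) (kap q μ σ (p + 1)) :=
      h.kk (by omega) (by omega) (by omega) (by omega) (by omega)
    have d3 : Commute (kap q μ σ (p + 1 + 2 * i + 3 + 1)) (kap q μ σ (p + 1 + 1)) :=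
      h.kk (by omega) (by omega) (by omega) (by omega) (by omega)
    have k121 := (h.2.2.2.2 (p + 1) (by omega) (by omega)).1
    have K121 := (h.2.2.2.2 (p + 1 + 2 * i + 3) (by omega) (by omega)).2.1
    have e : cW q μ σ p (i + 3) = cW q μ σ (p + 1) (i + 2) * kap q μ σ (p + 1) *
        kap q μ σ (p + 1 + 2 * i + 3 + 1) * cW q μ σ (p + 1) (i + 2) := by
      rw [cW]; congr 3; omega
    have e' : cW q μ σ (p + 1) (i + 2) = cW q μ σ (p + 1 + 1) (i + 1) * kap q μ σ (p + 1 + 1) *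
        kap q μ σ (p + 1 + 2 * i + 3) * cW q μ σ (p + 1 + 1) (i + 1) := by
      rw [cW]
    rw [e]
    have e2 : cW q μ σ (p + 1 + 1) (i + 1) * cW q μ σ (p + 1) (i + 2) = cW q μ σ (p + 1) (i + 2) := by
      rw [e']; simp only [← mul_assoc, hb]
    generalize cW q μ σ (p + 1) (i + 2) = a at *
    generalize cW q μ σ (p + 1 + 1) (i + 1) = b at *
    generalize kap q μ σ (p + 1 + 2 * i + 3 + 1) = K1 at *
    generalize kap q μ σ (p + 1 + 2 * i + 3) = K2 at *
    generalize kap q μ σ (p + 1 + 1) = k2 at *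
    generalize kap q μ σ (p + 1) = k1 at *
    calc a * k1 * K1 * a * (a * k1 * K1 * a) = a * k1 * K1 * (a * a) * k1 * K1 * a := by
          simp only [mul_assoc]
      _ = a * k1 * K1 * (b * k2 * K2 * b) * k1 * K1 * a := by rw [hB, ← e']
      _ = a * k1 * (K1 * (b * (k2 * (K2 * (b * (k1 * (K1 * a))))))) := by simp only [mul_assoc]
      _ = a * k1 * (b * (k2 * (k1 * (K1 * (K2 * (K1 * a)))))) := by
          rw [c1.left_comm, c2.left_comm, e2, d1.left_comm, ← c2.left_comm, d3.left_comm,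
            d2.left_comm]
      _ = a * (k1 * (b * (k2 * (k1 * (K1 * K2 * K1 * a))))) := by simp only [mul_assoc]
      _ = a * (b * (k1 * k2 * k1 * (K1 * a))) := by
          rw [K121, ← c1.left_comm]; simp only [mul_assoc]
      _ = a * k1 * K1 * a := by
          rw [k121, c1.left_comm, c2.left_comm, e2]; simp only [mul_assoc]

theorem slide_first (a b k1 K1 k2 K2 S1 T2 : A)
    (ha : a = b * k2 * K2 * b) (ba : b * a = a)
    (c1 : Commute S1 b) (c2 : Commute S1 k2) (c3 : Commute S1 k1)
    (c4 : Commute b k1) (c5 : Commute b K1) (c6 : Commute K2 k1)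
    (r : T2 * K1 = S1 * K2 * K1) :
    S1 * (a * (k1 * (K1 * a))) = b * (k2 * (k1 * (T2 * (K1 * a)))) := by
  nth_rewrite 1 [ha]
  simp only [mul_assoc]
  rw [c1.left_comm, c2.left_comm, c4.left_comm, c5.left_comm, ba, c6.left_comm, c3.left_comm,
    ← mul_assoc T2, r]
  simp only [mul_assoc]

theorem slide_half (a b d k1 K1 k2 K2 k3 K3 S1 T2 S3 : A)
    (ha : a = b * k2 * K2 * b) (ba : b * a = a)
    (c1 : Commute S1 b) (c2 : Commute S1 k2) (c3 : Commute S1 k1)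
    (c4 : Commute b k1) (c5 : Commute b K1) (c6 : Commute K2 k1)
    (r : T2 * K1 = S1 * K2 * K1)
    (hb : b = d * k3 * K3 * d) (da : d * a = a)
    (d1 : Commute d k1) (d2 : Commute d k2) (d3 : Commute d T2) (d4 : Commute d K1)
    (d5 : Commute K3 k2) (d6 : Commute K3 k1) (d7 : Commute S3 K1)
    (r2 : K3 * T2 = K3 * K2 * S3) :
    S1 * (a * (k1 * (K1 * a))) = d * ((k3 * k2 * k1) * ((K3 * K2 * K1) * (S3 * a))) := by
  rw [slide_first a b k1 K1 k2 K2 S1 T2 ha ba c1 c2 c3 c4 c5 c6 r, hb]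
  simp only [mul_assoc]
  rw [d2.left_comm, d1.left_comm, d3.left_comm, d4.left_comm, da, d5.left_comm, d6.left_comm,
    ← mul_assoc K3, r2]
  simp only [mul_assoc]
  rw [d7.left_comm]

theorem cW_slide (h : BMWrels q μ n σ σi) (hη : etaC q μ ≠ 0) (i : ℕ) : ∀ p, p + 2 * i ≤ n →
    ∀ r s, p < r → r < p + i → r + s = 2 * (p + i) →
    σ s * cW q μ σ p i = σ r * cW q μ σ p i := by
  induction i with
  | zero => intro p hp r s h1 h2 h3; omega
  | succ i ih =>
  intro p hp r s h1 h2 h3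
  match i, ih with
  | 0, _ => omega
  | i + 1, ih =>
  have ih' := ih (p + 1) (by omega)
  by_cases hr : p + 1 < r
  · rw [cW]
    simp only [← mul_assoc]
    rw [ih' r s hr (by omega) (by omega)]
  have hr : r = p + 1 := by omega
  subst hr
  have hs : s = p + 2 * i + 3 := by omega
  subst hs
  match i, ih' with
  | 0, _ =>
    have r1 := ((h.2.2.2.2 (p + 1) (by omega) (by omega)).2.2 σi σ (Or.inr ⟨rfl, rfl⟩)).2.2.1
    have r2 := ((h.2.2.2.2 (p + 2) (by omega) (by omega)).2.2 σi σ (Or.inr ⟨rfl, rfl⟩)).2.2.2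
    have c13 : Commute (kap q μ σ (p + 1)) (kap q μ σ (p + 3)) :=
      h.kk (by omega) (by omega) (by omega) (by omega) (by omega)
    simp only [cW, Nat.mul_zero, Nat.add_zero, add_assoc, Nat.reduceAdd, zero_add] at *
    simp only [smul_mul_assoc, mul_smul_comm]
    congr 2
    simp only [← mul_assoc]
    rw [← r1, mul_assoc (_ * _) _ (kap q μ σ (p + 3)), c13.eq, ← mul_assoc, ← r2,
      mul_assoc (σi _), ← c13.eq, ← mul_assoc]
  | 1, _ =>
    have k1 : Commute (kap q μ σ (p + 1)) (kap q μ σ (p + 5)) :=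
      h.kk (by omega) (by omega) (by omega) (by omega) (by omega)
    have hba : cW q μ σ (p + 2) 1 * cW q μ σ (p + 1) 2 = cW q μ σ (p + 1) 2 := by
      have := cW_idem h hη 1 (p + 2) (by omega)
      rw [cW.eq_3]; simp only [← mul_assoc, add_assoc, Nat.reduceAdd, zero_add]; rw [this]
    have ha : cW q μ σ (p + 1) 2 = cW q μ σ (p + 2) 1 * kap q μ σ (p + 2) * kap q μ σ (p + 4) *
        cW q μ σ (p + 2) 1 := by
      rw [cW.eq_3]
    have k24 : Commute (kap q μ σ (p + 2)) (kap q μ σ (p + 4)) :=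
      h.kk (by omega) (by omega) (by omega) (by omega) (by omega)
    have ha' : cW q μ σ (p + 1) 2 = cW q μ σ (p + 2) 1 * kap q μ σ (p + 4) * kap q μ σ (p + 2) *
        cW q μ σ (p + 2) 1 := by
      rw [ha, mul_assoc (cW q μ σ (p + 2) 1), k24.eq, ← mul_assoc]
    have X1 := slide_first _ _ (kap q μ σ (p + 1)) (kap q μ σ (p + 5)) _ _ (σ (p + 5)) (σi (p + 4))
      ha hba (h.c_of (by omega) (by omega) (by omega) (by omega))
      (h.sk (by omega) (by omega) (by omega) (by omega) (by omega))
      (h.sk (by omega) (by omega) (by omega) (by omega) (by omega))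
      (h.ck (by omega) (by omega) (by omega) (by omega))
      (h.ck (by omega) (by omega) (by omega) (by omega))
      (h.kk (by omega) (by omega) (by omega) (by omega) (by omega))
      ((h.2.2.2.2 (p + 4) (by omega) (by omega)).2.2 σi σ (Or.inr ⟨rfl, rfl⟩)).2.2.2
    have X2 := slide_first _ _ (kap q μ σ (p + 5)) (kap q μ σ (p + 1)) _ _ (σ (p + 1)) (σi (p + 2))
      ha' hba (h.c_of (by omega) (by omega) (by omega) (by omega))
      (h.sk (by omega) (by omega) (by omega) (by omega) (by omega))
      (h.sk (by omega) (by omega) (by omega) (by omega) (by omega))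
      (h.ck (by omega) (by omega) (by omega) (by omega))
      (h.ck (by omega) (by omega) (by omega) (by omega))
      (h.kk (by omega) (by omega) (by omega) (by omega) (by omega))
      ((h.2.2.2.2 (p + 1) (by omega) (by omega)).2.2 σi σ (Or.inr ⟨rfl, rfl⟩)).2.2.1
    have r1 : kap q μ σ (p + 3) * σi (p + 4) = kap q μ σ (p + 3) * kap q μ σ (p + 4) * σ (p + 3) :=
      ((h.2.2.2.2 (p + 3) (by omega) (by omega)).2.2 σi σ (Or.inr ⟨rfl, rfl⟩)).1
    have r2 : σi (p + 2) * kap q μ σ (p + 3) = σ (p + 3) * kap q μ σ (p + 2) * kap q μ σ (p + 3) :=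
      ((h.2.2.2.2 (p + 2) (by omega) (by omega)).2.2 σi σ (Or.inr ⟨rfl, rfl⟩)).2.2.2
    have k13 : Commute (kap q μ σ (p + 1)) (kap q μ σ (p + 3)) :=
      h.kk (by omega) (by omega) (by omega) (by omega) (by omega)
    have k25 : Commute (kap q μ σ (p + 2)) (kap q μ σ (p + 5)) :=
      h.kk (by omega) (by omega) (by omega) (by omega) (by omega)
    have s35 : Commute (σ (p + 3)) (kap q μ σ (p + 5)) :=
      h.sk (by omega) (by omega) (by omega) (by omega) (by omega)
    have i41 : Commute (σi (p + 4)) (kap q μ σ (p + 1)) :=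
      h.ik (by omega) (by omega) (by omega) (by omega) (by omega)
    have i42 : Commute (σi (p + 4)) (kap q μ σ (p + 2)) :=
      h.ik (by omega) (by omega) (by omega) (by omega) (by omega)
    have hc1 : cW q μ σ (p + 2) 1 = (etaC q μ)⁻¹ • kap q μ σ (p + 3) := by rw [cW]
    have hc : cW q μ σ p 3 = cW q μ σ (p + 1) 2 * kap q μ σ (p + 1) * kap q μ σ (p + 5) *
      cW q μ σ (p + 1) 2 := by rw [cW.eq_3]
    show σ (p + 5) * cW q μ σ p 3 = σ (p + 1) * cW q μ σ p 3
    rw [hc]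
    simp only [mul_assoc]
    rw [X1]
    rw [k1.left_comm, X2]
    have key : σ (p + 3) * (kap q μ σ (p + 2) * (kap q μ σ (p + 1) * cW q μ σ (p + 1) 2)) =
        σi (p + 2) * (kap q μ σ (p + 1) * cW q μ σ (p + 1) 2) := by
      rw [← hba, hc1, smul_mul_assoc]
      simp only [mul_smul_comm]
      congr 1
      rw [k13.left_comm, ← mul_assoc (σi _), r2]
      simp only [mul_assoc]
    rw [hc1, smul_mul_assoc, smul_mul_assoc]
    congr 1
    rw [← i41.left_comm, ← i42.left_comm, ← mul_assoc, r1, k1.left_comm, k25.left_comm]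
    simp only [mul_assoc]
    rw [s35.left_comm, key]
  | i + 2, ih' =>
    have hd := cW_idem h hη (i + 1) (p + 3) (by omega)
    have hb := cW_idem h hη (i + 2) (p + 2) (by omega)
    have Eb : cW q μ σ (p + 2) (i + 2) = cW q μ σ (p + 3) (i + 1) * kap q μ σ (p + 3) *
        kap q μ σ (p + 2 * i + 5) * cW q μ σ (p + 3) (i + 1) := by
      rw [cW.eq_3]
      have e1 : p + 2 + 2 * i + 3 = p + 2 * i + 5 := by omega
      rw [e1]
    have Ea : cW q μ σ (p + 1) (i + 3) = cW q μ σ (p + 2) (i + 2) * kap q μ σ (p + 2) *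
        kap q μ σ (p + 2 * i + 6) * cW q μ σ (p + 2) (i + 2) := by
      rw [cW.eq_3]
      have e1 : p + 1 + 2 * (i + 1) + 3 = p + 2 * i + 6 := by omega
      rw [e1]
    have Ec : cW q μ σ p (i + 4) = cW q μ σ (p + 1) (i + 3) * kap q μ σ (p + 1) *
        kap q μ σ (p + 2 * i + 7) * cW q μ σ (p + 1) (i + 3) := by
      rw [cW.eq_3]
      have e1 : p + 2 * (i + 2) + 3 = p + 2 * i + 7 := by omega
      rw [e1]
    have ba : cW q μ σ (p + 2) (i + 2) * cW q μ σ (p + 1) (i + 3) = cW q μ σ (p + 1) (i + 3) := by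
      rw [Ea]; simp only [← mul_assoc, hb]
    have db : cW q μ σ (p + 3) (i + 1) * cW q μ σ (p + 2) (i + 2) = cW q μ σ (p + 2) (i + 2) := by
      rw [Eb]; simp only [← mul_assoc, hd]
    have da : cW q μ σ (p + 3) (i + 1) * cW q μ σ (p + 1) (i + 3) = cW q μ σ (p + 1) (i + 3) := by
      rw [← ba, ← mul_assoc, db]
    have kk : ∀ x y, x ≤ 3 → 1 ≤ x → 5 ≤ y → y ≤ 7 →
        Commute (kap q μ σ (p + x)) (kap q μ σ (p + 2 * i + y)) := by
      intro x y h1 h2 h3 h4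
      exact h.kk (by omega) (by omega) (by omega) (by omega) (by omega)
    have Eb' : cW q μ σ (p + 2) (i + 2) = cW q μ σ (p + 3) (i + 1) * kap q μ σ (p + 2 * i + 5) *
        kap q μ σ (p + 3) * cW q μ σ (p + 3) (i + 1) := by
      rw [Eb, mul_assoc (cW q μ σ (p + 3) (i + 1)), (kk 3 5 (by omega) (by omega) (by omega) (by omega)).eq, ← mul_assoc]
    have Ea' : cW q μ σ (p + 1) (i + 3) = cW q μ σ (p + 2) (i + 2) * kap q μ σ (p + 2 * i + 6) *
        kap q μ σ (p + 2) * cW q μ σ (p + 2) (i + 2) := by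
      rw [Ea, mul_assoc (cW q μ σ (p + 2) (i + 2)), (kk 2 6 (by omega) (by omega) (by omega) (by omega)).eq, ← mul_assoc]
    have X1 := slide_half _ _ _ (kap q μ σ (p + 1)) (kap q μ σ (p + 2 * i + 7)) _ _ _ _
      (σ (p + 2 * i + 7)) (σi (p + 2 * i + 6)) (σ (p + 2 * i + 5)) Ea ba
      (h.c_of (by omega) (by omega) (by omega) (by omega))
      (h.sk (by omega) (by omega) (by omega) (by omega) (by omega))
      (h.sk (by omega) (by omega) (by omega) (by omega) (by omega))
      (h.ck (by omega) (by omega) (by omega) (by omega))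
      (h.ck (by omega) (by omega) (by omega) (by omega))
      (h.kk (by omega) (by omega) (by omega) (by omega) (by omega))
      ((h.2.2.2.2 (p + 2 * i + 6) (by omega) (by omega)).2.2 σi σ (Or.inr ⟨rfl, rfl⟩)).2.2.2
      Eb da
      (h.ck (by omega) (by omega) (by omega) (by omega))
      (h.ck (by omega) (by omega) (by omega) (by omega))
      (h.cinv (by omega) (by omega) (by omega) (by omega))
      (h.ck (by omega) (by omega) (by omega) (by omega))
      (h.kk (by omega) (by omega) (by omega) (by omega) (by omega))
      (h.kk (by omega) (by omega) (by omega) (by omega) (by omega))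
      (h.sk (by omega) (by omega) (by omega) (by omega) (by omega))
      ((h.2.2.2.2 (p + 2 * i + 5) (by omega) (by omega)).2.2 σi σ (Or.inr ⟨rfl, rfl⟩)).1
    have X2 := slide_half _ _ _ (kap q μ σ (p + 2 * i + 7)) (kap q μ σ (p + 1)) _ _ _ _
      (σ (p + 1)) (σi (p + 2)) (σ (p + 3)) Ea' ba
      (h.c_of (by omega) (by omega) (by omega) (by omega))
      (h.sk (by omega) (by omega) (by omega) (by omega) (by omega))
      (h.sk (by omega) (by omega) (by omega) (by omega) (by omega))
      (h.ck (by omega) (by omega) (by omega) (by omega))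
      (h.ck (by omega) (by omega) (by omega) (by omega))
      (h.kk (by omega) (by omega) (by omega) (by omega) (by omega))
      ((h.2.2.2.2 (p + 1) (by omega) (by omega)).2.2 σi σ (Or.inr ⟨rfl, rfl⟩)).2.2.1
      Eb' da
      (h.ck (by omega) (by omega) (by omega) (by omega))
      (h.ck (by omega) (by omega) (by omega) (by omega))
      (h.cinv (by omega) (by omega) (by omega) (by omega))
      (h.ck (by omega) (by omega) (by omega) (by omega))
      (h.kk (by omega) (by omega) (by omega) (by omega) (by omega))
      (h.kk (by omega) (by omega) (by omega) (by omega) (by omega))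
      (h.sk (by omega) (by omega) (by omega) (by omega) (by omega))
      ((h.2.2.2.2 (p + 2) (by omega) (by omega)).2.2 σi σ (Or.inr ⟨rfl, rfl⟩)).2.1
    have mid : σ (p + 2 * i + 5) * cW q μ σ (p + 1) (i + 3) = σ (p + 3) * cW q μ σ (p + 1) (i + 3) :=
      ih' (p + 3) (p + 2 * i + 5) (by omega) (by omega) (by omega)
    have e7 : p + 2 * (i + 2) + 3 = p + 2 * i + 7 := by omega
    rw [e7]
    show σ (p + 2 * i + 7) * cW q μ σ p (i + 4) = σ (p + 1) * cW q μ σ p (i + 4)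
    rw [Ec]
    simp only [mul_assoc _ _ (cW q μ σ (p + 1) (i + 3))]
    rw [mul_assoc (cW q μ σ (p + 1) (i + 3)), X1]
    rw [(kk 1 7 (by omega) (by omega) (by omega) (by omega)).left_comm, X2, mid]
    have big : Commute (kap q μ σ (p + 3) * kap q μ σ (p + 2) * kap q μ σ (p + 1))
      (kap q μ σ (p + 2 * i + 5) * kap q μ σ (p + 2 * i + 6) * kap q μ σ (p + 2 * i + 7)) := by
      have kx : ∀ x, x ≤ 3 → 1 ≤ x → Commute (kap q μ σ (p + x))
        (kap q μ σ (p + 2 * i + 5) * kap q μ σ (p + 2 * i + 6) * kap q μ σ (p + 2 * i + 7)) := by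
        intro x h1 h2
        exact ((kk x 5 h1 h2 (by omega) (by omega)).mul_right
          (kk x 6 h1 h2 (by omega) (by omega))).mul_right (kk x 7 h1 h2 (by omega) (by omega))
      exact ((kx 3 (by omega) (by omega)).mul_left (kx 2 (by omega) (by omega))).mul_left
        (kx 1 (by omega) (by omega))
    rw [big.left_comm]

end contract

section final
variable {A : Type*} [Ring A] [Algebra ℂ A]

theorem proj_aux (q μ : ℂ) (hq : q ≠ 0) (hl : q - q⁻¹ ≠ 0) (hμ : μ ≠ 0) (hμ2 : μ ≠ -q⁻¹)
    (σ : ℕ → A) (i : ℕ) (sk : σ i * kap q μ σ i = μ • kap q μ σ i) :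
    σ i * sMinus q μ σ i (q ^ (2 * 1))⁻¹ = (-q⁻¹) • sMinus q μ σ i (q ^ (2 * 1))⁻¹ := by
  have hsq := kap_sq q μ hq hl hμ σ i
  have hl2 : q ^ 2 - 1 ≠ 0 := by
    intro h; apply hl; field_simp; simpa using h
  have hm : μ * q + 1 ≠ 0 := by
    intro h; apply hμ2; field_simp; linear_combination h
  have e0 : μ + q * (q ^ (2 * 1))⁻¹ ≠ 0 := by
    intro h; apply hm; field_simp at h
    have h' : q * (μ * q + 1) = 0 := by linear_combination h
    exact (mul_eq_zero.mp h').resolve_left hq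
  have e1 : ((q ^ (2 * 1))⁻¹ - 1) / (q - q⁻¹) = -q⁻¹ := by
    rw [div_eq_iff hl]; field_simp; ring
  obtain ⟨B, hB⟩ : ∃ B, B = μ * ((q ^ (2 * 1))⁻¹ - 1) / (μ + q * (q ^ (2 * 1))⁻¹) := ⟨_, rfl⟩
  have e2 : B * (μ + q⁻¹) = -q⁻¹ * μ * (q - q⁻¹) := by
    rw [eq_div_iff e0] at hB
    have : q * (q ^ (2 * 1))⁻¹ = q⁻¹ := by field_simp
    rw [this] at hB
    rw [hB]; field_simp; ring
  unfold sMinus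
  rw [e1, ← hB, mul_add, mul_add, mul_smul_comm, mul_smul_comm, hsq, sk]
  have e3 : B * μ = -q⁻¹ * μ * (q - q⁻¹) - B * q⁻¹ := by linear_combination e2
  have e4 : q⁻¹ * q = 1 := inv_mul_cancel₀ hq
  rw [smul_smul, e3, mul_one]
  match_scalars
  · linear_combination (-1 : ℂ) * e4
  · ring
  · ring

theorem yb_rel {q μ : ℂ} {n : ℕ} {σ σi : ℕ → A} (h : BMWrels q μ n σ σi) (x y : ℂ)
    (hq : q ≠ 0) (hl : q - q⁻¹ ≠ 0) (hμ : μ ≠ 0)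
    (hx : μ + q * x ≠ 0) (hy : μ + q * y ≠ 0) (hxy : μ + q * (x * y) ≠ 0)
    (i : ℕ) (hi : 1 ≤ i) (hi' : i + 1 < n) :
    sMinus q μ σ i x * sMinus q μ σ (i + 1) (x * y) * sMinus q μ σ i y =
    sMinus q μ σ (i + 1) y * sMinus q μ σ i (x * y) * sMinus q μ σ (i + 1) x := by
  have hl2 : q ^ 2 - 1 ≠ 0 := by
    intro h; apply hl; field_simp; simpa using h
  obtain ⟨h1, h2, h3, h4, h5⟩ := h
  obtain ⟨a1, a3, a5, a7⟩ := (h5 i hi (by omega)).2.2 σ σi (Or.inl ⟨rfl, rfl⟩)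
  obtain ⟨a2, a4, a6, a8⟩ := (h5 i hi (by omega)).2.2 σi σ (Or.inr ⟨rfl, rfl⟩)
  obtain ⟨b1, b2, b3⟩ := h4 i hi (by omega)
  obtain ⟨b4, b5, b6⟩ := h4 (i + 1) (by omega) (by omega)
  exact yb_pair q μ x y hq hl2 hμ hx hy hxy _ _ _ _ (σi i) (σi (i + 1))
    (kap_sq q μ hq hl hμ σ i) (kap_sq q μ hq hl hμ σ (i + 1))
    (h1 i hi (by omega)).1 (h1 i hi (by omega)).2 (h1 (i + 1) (by omega) (by omega)).1
    (h1 (i + 1) (by omega) (by omega)).2 b1 b2 b3 b4 b5 b6 (h2 i hi (by omega))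
    (h5 i hi (by omega)).1 (h5 i hi (by omega)).2.1 a1 a2 a3 a4 a5 a6 a7 a8

theorem goodSeq_of {q μ : ℂ} {j : ℕ} {σ σi : ℕ → A} (h : BMWrels q μ (2 * j) σ σi)
    (hq : q ≠ 0) (hl : q - q⁻¹ ≠ 0) (hμ : μ ≠ 0) (hμ2 : μ ≠ -q⁻¹)
    (hrange : ∀ i, 2 ≤ i → i ≤ 2 * j → q ^ (2 * i) ≠ 1 ∧ μ ≠ -q ^ (3 - 2 * (i : ℤ))) :
    GoodSeq q μ σ (j - 1) := by
  have nz : ∀ m : ℕ, 1 ≤ m → m + 1 ≤ 2 * j → μ + q * (q ^ (2 * m))⁻¹ ≠ 0 := by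
    intro m h1 h2 h3
    apply (hrange (m + 1) (by omega) h2).2
    have : q ^ (3 - 2 * ((m + 1 : ℕ) : ℤ)) = q * (q ^ (2 * m))⁻¹ := by
      have e : (3 - 2 * ((m + 1 : ℕ) : ℤ)) = 1 - ((2 * m : ℕ) : ℤ) := by push_cast; ring
      rw [e, zpow_sub₀ hq, zpow_one, zpow_natCast, div_eq_mul_inv]
    rw [this]
    linear_combination h3
  have mulm : ∀ m : ℕ, (q ^ (2 * m))⁻¹ * (q ^ (2 * 1))⁻¹ = (q ^ (2 * (m + 1)))⁻¹ := by
    intro m; rw [← mul_inv, ← pow_add]; rfl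
  constructor
  · intro i k h1 h2 h3
    exact h.cs h1 (by omega) (by omega) (by omega) (by omega)
  · intro i h1 h2
    exact proj_aux q μ hq hl hμ hμ2 σ i (h.2.2.2.1 i h1 (by omega)).1
  · intro i m h1 h2 h3 h4
    have := yb_rel h (q ^ (2 * m))⁻¹ (q ^ (2 * 1))⁻¹ hq hl hμ (nz m h3 (by omega))
      (nz 1 le_rfl (by omega)) (by rw [mulm]; exact nz (m + 1) (by omega) (by omega)) i h1
      (by omega)
    rwa [mulm] at this
  · intro i m h1 h2 h3 h4
    have := yb_rel h (q ^ (2 * 1))⁻¹ (q ^ (2 * m))⁻¹ hq hl hμ (nz 1 le_rfl (by omega))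
      (nz m h3 (by omega)) (by rw [mul_comm _ (q ^ (2 * m))⁻¹, mulm]; exact nz (m + 1) (by omega) (by omega)) i h1
      (by omega)
    rwa [mul_comm _ (q ^ (2 * m))⁻¹, mulm] at this

theorem GoodSeq.flip {q μ : ℂ} {j : ℕ} {σ : ℕ → A} (h : GoodSeq q μ σ (j - 1)) :
    GoodSeq q μ (fun i => σ (j - i)) (j - 1) := by
  have es : ∀ i x, sMinus q μ (fun i => σ (j - i)) i x = sMinus q μ σ (j - i) x := fun _ _ => rfl
  constructor
  · intro i k h1 h2 h3
    exact (h.comm (j - k) (j - i) (by omega) (by omega) (by omega)).symm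
  · intro i h1 h2
    exact h.proj (j - i) (by omega) (by omega)
  · intro i m h1 h2 h3 h4
    have := h.yb2 (j - (i + 1)) m (by omega) (by omega) h3 h4
    have e : j - (i + 1) + 1 = j - i := by omega
    rw [e] at this
    simp only [es]
    exact this.symm
  · intro i m h1 h2 h3 h4
    have := h.yb1 (j - (i + 1)) m (by omega) (by omega) h3 h4
    have e : j - (i + 1) + 1 = j - i := by omega
    rw [e] at this
    simp only [es]
    exact this.symm

theorem sMinus_slide (q μ x : ℂ) (σ τ : ℕ → A) (r s : ℕ) (c : A) (hc : Commute (σ s) (τ r))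
    (h : σ s * c = τ r * c) : sMinus q μ σ s x * c = sMinus q μ τ r x * c := by
  have hk : kap q μ σ s * c = kap q μ τ r * c := by
    have e2 : σ s * (σ s * c) = τ r * (τ r * c) := by rw [h, hc.left_comm, h]
    have e3 : σ s * (τ r * c) = τ r * (τ r * c) := by rw [hc.left_comm, h]
    simp only [kap, Algebra.algebraMap_eq_smul_one, smul_mul_assoc, mul_assoc, add_mul, sub_mul,
      mul_add, mul_smul_comm, one_mul, h, e3]
  simp only [sMinus, add_mul, smul_mul_assoc, h, hk]

theorem aW_slide (q μ : ℂ) (σ τ : ℕ → A) (N : ℕ) (c : A)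
    (hc : ∀ r s, 1 ≤ r → r ≤ N → 1 ≤ s → s ≤ N → Commute (σ s) (τ r))
    (h : ∀ r, 1 ≤ r → r ≤ N → σ r * c = τ r * c) (m : ℕ) (hm : m ≤ N + 1) :
    aW q μ σ 0 m * c = aW q μ τ 0 m * c := by
  induction m with
  | zero => simp [aW]
  | succ m ih =>
    cases m with
    | zero => simp [aW]
    | succ m =>
      have ih := ih (by omega)
      have hs := sMinus_slide q μ ((q ^ (2 * (m + 1)))⁻¹) σ τ (m + 1) (m + 1) c
        (hc _ _ (by omega) (by omega) (by omega) (by omega)) (h _ (by omega) (by omega))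
      have ca : ∀ s, 1 ≤ s → s ≤ N → Commute (σ s) (aW q μ τ 0 (m + 1)) := fun s h1 h2 =>
        commute_aW q μ 0 (m + 1) (fun i h3 h4 => hc _ _ (by omega) (by omega) h1 h2)
      have ca' : ∀ s, 1 ≤ s → s ≤ N → Commute (aW q μ σ 0 (m + 1)) (τ s) := fun s h1 h2 =>
        (commute_aW q μ 0 (m + 1)
          (fun i h3 h4 => (hc _ _ h1 h2 (by omega) (by omega)).symm)).symm
      have c1 : Commute (sMinus q μ σ (m + 1) ((q ^ (2 * (m + 1)))⁻¹)) (aW q μ τ 0 (m + 1)) :=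
        (commute_sMinus q μ (ca (m + 1) (by omega) (by omega)).symm _).symm
      have c2 : Commute (aW q μ σ 0 (m + 1)) (aW q μ τ 0 (m + 1)) :=
        commute_aW q μ 0 (m + 1) (fun i h3 h4 => ca' i (by omega) (by omega))
      have c3 : Commute (aW q μ σ 0 (m + 1)) (sMinus q μ τ (m + 1) ((q ^ (2 * (m + 1)))⁻¹)) :=
        commute_sMinus q μ (ca' (m + 1) (by omega) (by omega)) _
      rw [aW, aW, smul_mul_assoc, smul_mul_assoc, zero_add]
      congr 1
      simp only [mul_assoc]
      rw [ih, c1.left_comm, hs, c2.left_comm, c3.left_comm, ih]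

end final

/-- Lemma 4.12: in any unital associative ℂ-algebra `W` with elements
`σ₁, …, σ_{2j−1}` satisfying the BMW relations, `a^{(j)↑j}·c^{(2j)} = a^{(j)}·c^{(2j)}`. -/
theorem shifted_antisymmetrizer_contractor
    (q μ : ℂ) [Ring W] [Algebra ℂ W]
    (hq : q ≠ 0 ∧ q ≠ 1 ∧ q ≠ -1) (hμ : μ ≠ 0 ∧ μ ≠ q ∧ μ ≠ -q⁻¹)
    (j : ℕ) (hj : 1 ≤ j)
    (hrange : ∀ i, 2 ≤ i → i ≤ 2 * j → q ^ (2 * i) ≠ 1 ∧ μ ≠ -q ^ (3 - 2 * (i : ℤ)))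
    (σ σi : ℕ → W)
    (hrel : BMWrels q μ (2 * j) σ σi) :
    aW q μ σ j j * cW q μ σ 0 j = aW q μ σ 0 j * cW q μ σ 0 j := by
  obtain ⟨hq0, hq1, hq2⟩ := hq
  obtain ⟨hμ0, hμ1, hμ2⟩ := hμ
  have hl2 : q ^ 2 - 1 ≠ 0 := by
    intro h
    have : (q - 1) * (q + 1) = 0 := by linear_combination h
    rcases mul_eq_zero.mp this with h | h
    · exact hq1 (by linear_combination h)
    · exact hq2 (by linear_combination h)
  have hl : q - q⁻¹ ≠ 0 := by
    intro h; apply hl2; field_simp at h; simpa using h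
  have hη : etaC q μ ≠ 0 := by
    unfold etaC
    refine div_ne_zero (mul_ne_zero ?_ ?_) (mul_ne_zero hμ0 hl)
    · intro h; exact hμ1 (by linear_combination -h)
    · intro h; exact hμ2 (by linear_combination h)
  have hn : ∀ k, 2 ≤ k → k ≤ j - 1 + 1 → qnum q k ≠ 0 := by
    intro k h1 h2
    unfold qnum
    refine div_ne_zero ?_ hl
    intro h
    apply (hrange k h1 (by omega)).1
    have hk : q ^ k ≠ 0 := pow_ne_zero _ hq0
    rw [inv_pow, sub_eq_zero] at h
    rw [two_mul, pow_add]
    nth_rewrite 1 [h]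
    exact inv_mul_cancel₀ hk
  have hg := goodSeq_of hrel hq0 hl hμ0 hμ2 hrange
  have hf := hg.flip
  have A1 := hg.absorb hq0 hl hn j (by omega)
  have A2 := hf.absorb hq0 hl hn j (by omega)
  have E1 : aW q μ σ 0 j * aW q μ (fun i => σ (j - i)) 0 j = aW q μ (fun i => σ (j - i)) 0 j := by
    apply aW_left q μ hq0 hl j (fun k h1 h2 => hn k h1 (by omega))
    intro i h1 h2
    have := (A2 (j - i) (by omega) (by omega)).1
    have e : j - (j - i) = i := by omega
    simpa only [e] using this
  have E2 : aW q μ σ 0 j * aW q μ (fun i => σ (j - i)) 0 j = aW q μ σ 0 j := by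
    apply aW_right q μ hq0 hl j (fun k h1 h2 => hn k h1 (by omega))
    intro i h1 h2
    exact (A1 (j - i) (by omega) (by omega)).2
  rw [← E2, E1, aW_shift]
  apply aW_slide q μ (fun i => σ (j + i)) (fun i => σ (j - i)) (j - 1) _ _ _ j (by omega)
  · intro r s h1 h2 h3 h4
    exact hrel.cs (by omega) (by omega) (by omega) (by omega) (by omega)
  · intro r h1 h2
    exact cW_slide hrel hη j 0 (by omega) (j - r) (j + r) (by omega) (by omega) (by omega)

end
end
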